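/- arXiv:1410.4235 — 5 statements merged into one kernel-verified Lean document; each statement's English description precedes it below -/
import Mathlib

section
/- Let (S,·) be a partial semigroup and (Q,≤,·) a quantale. Then the function space Q^S, ordered pointwise and with multiplication given by convolution (f·g) x = ⨆_{x=y·z} f y · g z (supremum over all defined splittings x = y·z), is again a quantale. If Q is distributive, so is Q^S. If both S and Q are commutative, then Q^S is commutative. If S is a partial monoid with unit 1 and Q is unital, then Q^S is unital with unit series 𝟙 mapping 1 to 1 and every other element of S to 0. -/
/-!
Every clause holds pointwise. Since multiplication in `Q` preserves suprema in each argument,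
both `(f·g)·h` and `f·(g·h)` at `x` are suprema over iterated splittings of `x`, of
`(f a · g b) · h c` over `x = (a·b)·c` and of `f a · (g b · h c)` over `x = a·(b·c)`; associativity
of the partial multiplication says these are the same triples `(a, b, c)`
(`PartialSemigroup.split_right`, `PartialSemigroup.split_left`). Distributivity over suprema is an
interchange of suprema, and the lattice laws are inherited by evaluating at each point. For the
unit series, every splitting `x = y·z` with `y ≠ 1` contributes `⊥`, because multiplication in `Q`
is strict, which leaves only the splitting `x = 1·x`.
-/

/-- A partial semigroup: a partial multiplication (undefinedness `⊥` modelled by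
`Option`) that is associative in the strong (Kleisli) sense. -/
structure PartialSemigroup (S : Type*) where
  pmul : S → S → Option S
  passoc : ∀ x y z : S,
    (pmul x y).bind (fun w => pmul w z) = (pmul y z).bind (fun w => pmul x w)

/-- A quantale structure on a complete lattice: an associative multiplication
distributing over arbitrary suprema in both arguments. -/
structure QuantaleStruct (Q : Type*) [CompleteLattice Q] where
  mul : Q → Q → Q
  mul_assoc' : ∀ x y z : Q, mul (mul x y) z = mul x (mul y z)
  mul_sSup : ∀ (x : Q) (s : Set Q), mul x (sSup s) = ⨆ y ∈ s, mul x y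
  sSup_mul : ∀ (s : Set Q) (x : Q), mul (sSup s) x = ⨆ y ∈ s, mul y x

/-- Convolution of power series `f g : S → Q`:
`(f·g) x = ⨆_{x = y·z} (f y) · (g z)`, the supremum over all defined splittings. -/
noncomputable def convol {S Q : Type*} [CompleteLattice Q]
    (P : PartialSemigroup S) (Qm : QuantaleStruct Q) (f g : S → Q) : S → Q :=
  fun x => ⨆ p : {p : S × S // P.pmul p.1 p.2 = some x}, Qm.mul (f p.1.1) (g p.1.2)

open Classical in
/-- The unit power series: maps the unit `one` of `S` to the unit `e` of `Q`
and every other element to `0 = ⊥`. -/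
noncomputable def unitSeries {S Q : Type*} [CompleteLattice Q] (one : S) (e : Q) : S → Q :=
  fun x => if x = one then e else ⊥

theorem QuantaleStruct.mul_iSup {Q : Type*} {ι : Sort*} [CompleteLattice Q] (Qm : QuantaleStruct Q)
    (a : Q) (u : ι → Q) : Qm.mul a (⨆ i, u i) = ⨆ i, Qm.mul a (u i) := by
  rw [iSup, Qm.mul_sSup, iSup_range]

theorem QuantaleStruct.iSup_mul {Q : Type*} {ι : Sort*} [CompleteLattice Q] (Qm : QuantaleStruct Q)
    (u : ι → Q) (a : Q) : Qm.mul (⨆ i, u i) a = ⨆ i, Qm.mul (u i) a := by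
  rw [iSup, Qm.sSup_mul, iSup_range]

theorem QuantaleStruct.mul_bot {Q : Type*} [CompleteLattice Q] (Qm : QuantaleStruct Q)
    (a : Q) : Qm.mul a ⊥ = ⊥ := by
  simpa using Qm.mul_sSup a ∅

theorem QuantaleStruct.bot_mul {Q : Type*} [CompleteLattice Q] (Qm : QuantaleStruct Q)
    (a : Q) : Qm.mul ⊥ a = ⊥ := by
  simpa using Qm.sSup_mul ∅ a

theorem PartialSemigroup.split_right {S : Type*} (P : PartialSemigroup S) {a b c w x : S}
    (h₁ : P.pmul a b = some w) (h₂ : P.pmul w c = some x) :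
    ∃ v, P.pmul b c = some v ∧ P.pmul a v = some x := by
  have h := P.passoc a b c
  rw [h₁, Option.bind_some, h₂] at h
  exact Option.bind_eq_some_iff.mp h.symm

theorem PartialSemigroup.split_left {S : Type*} (P : PartialSemigroup S) {a b c v x : S}
    (h₁ : P.pmul b c = some v) (h₂ : P.pmul a v = some x) :
    ∃ w, P.pmul a b = some w ∧ P.pmul w c = some x := by
  have h := P.passoc a b c
  rw [h₁, Option.bind_some, h₂] at h
  exact Option.bind_eq_some_iff.mp h

theorem le_convol {S Q : Type*} [CompleteLattice Q] (P : PartialSemigroup S)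
    (Qm : QuantaleStruct Q) (f g : S → Q) {x y z : S} (h : P.pmul y z = some x) :
    Qm.mul (f y) (g z) ≤ convol P Qm f g x :=
  le_iSup (fun p : {p : S × S // P.pmul p.1 p.2 = some x} => Qm.mul (f p.1.1) (g p.1.2))
    ⟨(y, z), h⟩

theorem convol_le {S Q : Type*} [CompleteLattice Q] (P : PartialSemigroup S)
    (Qm : QuantaleStruct Q) (f g : S → Q) {x : S} {q : Q}
    (h : ∀ y z, P.pmul y z = some x → Qm.mul (f y) (g z) ≤ q) :
    convol P Qm f g x ≤ q :=
  iSup_le fun p => h p.1.1 p.1.2 p.2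

theorem QuantaleStruct.mul_mono {Q : Type*} [CompleteLattice Q] (Qm : QuantaleStruct Q)
    {a b c d : Q} (h₁ : a ≤ b) (h₂ : c ≤ d) : Qm.mul a c ≤ Qm.mul b d := by
  -- Preservation of binary suprema gives monotonicity.
  have hl : Qm.mul a c ≤ Qm.mul b c := by
    have h := Qm.sSup_mul {a, b} c
    rw [sSup_pair, sup_eq_right.mpr h₁, iSup_pair] at h
    exact h ▸ le_sup_left
  have hr : Qm.mul b c ≤ Qm.mul b d := by
    have h := Qm.mul_sSup b {c, d}
    rw [sSup_pair, sup_eq_right.mpr h₂, iSup_pair] at h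
    exact h ▸ le_sup_left
  exact hl.trans hr

theorem convol_assoc {S Q : Type*} [CompleteLattice Q] (P : PartialSemigroup S)
    (Qm : QuantaleStruct Q) (f g h : S → Q) :
    convol P Qm (convol P Qm f g) h = convol P Qm f (convol P Qm g h) := by
  funext x
  apply le_antisymm
  · refine convol_le P Qm _ _ fun w c hwc => ?_
    rw [convol, Qm.iSup_mul]
    refine iSup_le ?_
    rintro ⟨⟨a, b⟩, hab⟩
    obtain ⟨v, hv, hx⟩ := P.split_right hab hwc
    rw [Qm.mul_assoc']
    exact (Qm.mul_mono le_rfl (le_convol P Qm g h hv)).trans (le_convol P Qm f _ hx)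
  · refine convol_le P Qm _ _ fun a v hav => ?_
    rw [convol, Qm.mul_iSup]
    refine iSup_le ?_
    rintro ⟨⟨b, c⟩, hbc⟩
    obtain ⟨w, hw, hx⟩ := P.split_left hbc hav
    rw [← Qm.mul_assoc']
    exact (Qm.mul_mono (le_convol P Qm f g hw) le_rfl).trans (le_convol P Qm _ h hx)

theorem convol_sSup {S Q : Type*} [CompleteLattice Q] (P : PartialSemigroup S)
    (Qm : QuantaleStruct Q) (f : S → Q) (G : Set (S → Q)) :
    convol P Qm f (sSup G) = ⨆ g ∈ G, convol P Qm f g := by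
  funext x
  simp only [iSup_apply, convol, sSup_eq_iSup, Qm.mul_iSup]
  rw [iSup_comm]
  exact iSup_congr fun g => iSup_comm

theorem sSup_convol {S Q : Type*} [CompleteLattice Q] (P : PartialSemigroup S)
    (Qm : QuantaleStruct Q) (G : Set (S → Q)) (f : S → Q) :
    convol P Qm (sSup G) f = ⨆ g ∈ G, convol P Qm g f := by
  funext x
  simp only [iSup_apply, convol, sSup_eq_iSup, Qm.iSup_mul]
  rw [iSup_comm]
  exact iSup_congr fun g => iSup_comm

theorem convol_le_comm {S Q : Type*} [CompleteLattice Q] (P : PartialSemigroup S)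
    (Qm : QuantaleStruct Q) (hS : ∀ x y : S, P.pmul x y = P.pmul y x)
    (hQ : ∀ a b : Q, Qm.mul a b = Qm.mul b a) (f g : S → Q) :
    convol P Qm f g ≤ convol P Qm g f := fun x =>
  convol_le P Qm f g fun y z hyz => by
    rw [hQ]
    exact le_convol P Qm g f (by rw [hS, hyz])

theorem unitSeries_convol {S Q : Type*} [CompleteLattice Q] (P : PartialSemigroup S)
    (Qm : QuantaleStruct Q) (one : S) (hone : ∀ x : S, P.pmul one x = some x)
    (e : Q) (he : ∀ a : Q, Qm.mul e a = a) (f : S → Q) :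
    convol P Qm (unitSeries one e) f = f := by
  funext x
  apply le_antisymm
  · refine convol_le P Qm _ _ fun y z hyz => ?_
    by_cases hy : y = one
    · subst hy
      rw [hone, Option.some.injEq] at hyz
      simp [unitSeries, he, hyz]
    · simp [unitSeries, hy, Qm.bot_mul]
  · simpa [unitSeries, he] using le_convol P Qm (unitSeries one e) f (hone x)

theorem convol_unitSeries {S Q : Type*} [CompleteLattice Q] (P : PartialSemigroup S)
    (Qm : QuantaleStruct Q) (one : S) (hone : ∀ x : S, P.pmul x one = some x)
    (e : Q) (he : ∀ a : Q, Qm.mul a e = a) (f : S → Q) :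
    convol P Qm f (unitSeries one e) = f := by
  funext x
  apply le_antisymm
  · refine convol_le P Qm _ _ fun y z hyz => ?_
    by_cases hz : z = one
    · subst hz
      rw [hone, Option.some.injEq] at hyz
      simp [unitSeries, he, hyz]
    · simp [unitSeries, hz, Qm.mul_bot]
  · simpa [unitSeries, he] using le_convol P Qm f (unitSeries one e) (hone x)

/-- Lifting theorem: if `(S,·)` is a partial semigroup and `(Q,≤,·)` a quantale,
then `Q^S` with the pointwise order and convolution is a quantale;
distributivity of the lattice lifts; commutativity lifts if both `S` and `Q`
are commutative; and unitality lifts if `S` is a partial monoid and `Q` is unital. -/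
theorem stmt3 {S Q : Type*} [CompleteLattice Q]
    (P : PartialSemigroup S) (Qm : QuantaleStruct Q) :
    -- convolution is associative
    (∀ f g h : S → Q, convol P Qm (convol P Qm f g) h = convol P Qm f (convol P Qm g h)) ∧
    -- convolution distributes over arbitrary (pointwise) suprema in both arguments
    (∀ (f : S → Q) (G : Set (S → Q)), convol P Qm f (sSup G) = ⨆ g ∈ G, convol P Qm f g) ∧
    (∀ (G : Set (S → Q)) (f : S → Q), convol P Qm (sSup G) f = ⨆ g ∈ G, convol P Qm g f) ∧
    -- if Q is distributive then so is Q^S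
    ((∀ (a : Q) (s : Set Q), a ⊓ sSup s = ⨆ b ∈ s, a ⊓ b) →
      ∀ (f : S → Q) (A : Set (S → Q)), f ⊓ sSup A = ⨆ g ∈ A, f ⊓ g) ∧
    ((∀ (a : Q) (s : Set Q), a ⊔ sInf s = ⨅ b ∈ s, a ⊔ b) →
      ∀ (f : S → Q) (A : Set (S → Q)), f ⊔ sInf A = ⨅ g ∈ A, f ⊔ g) ∧
    -- commutativity lifts from S and Q to Q^S
    ((∀ x y : S, P.pmul x y = P.pmul y x) → (∀ a b : Q, Qm.mul a b = Qm.mul b a) →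
      ∀ f g : S → Q, convol P Qm f g = convol P Qm g f) ∧
    -- unitality lifts: if S is a partial monoid and Q is unital, then the unit
    -- series is a unit for convolution
    (∀ one : S, (∀ x : S, P.pmul one x = some x) → (∀ x : S, P.pmul x one = some x) →
      ∀ e : Q, (∀ a : Q, Qm.mul e a = a) → (∀ a : Q, Qm.mul a e = a) →
        ∀ f : S → Q,
          convol P Qm (unitSeries one e) f = f ∧ convol P Qm f (unitSeries one e) = f) := by
  refine ⟨convol_assoc P Qm, convol_sSup P Qm, sSup_convol P Qm, ?_, ?_, ?_, ?_⟩
  · intro hd f A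
    funext x
    -- The value of `sSup A` at `x` is the supremum of the set of values at `x`.
    have h := hd (f x) (Set.image (fun g : S → Q => g x) A)
    rw [sSup_image, iSup_image] at h
    simpa only [Pi.inf_apply, iSup_apply, sSup_eq_iSup] using h
  · intro hd f A
    funext x
    have h := hd (f x) (Set.image (fun g : S → Q => g x) A)
    rw [sInf_image, iInf_image] at h
    simpa only [Pi.sup_apply, iInf_apply, sInf_eq_iInf] using h
  · intro hS hQ f g
    exact le_antisymm (convol_le_comm P Qm hS hQ f g) (convol_le_comm P Qm hS hQ g f)
  · intro one hl hr e hel her f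
    exact ⟨unitSeries_convol P Qm one hl e hel f, convol_unitSeries P Qm one hr e her f⟩
end

section
/- Let (S,·) be a finite partial semigroup. If (Q,+,·,0) is a semiring, then Q^S with pointwise addition and convolution (f·g) x = Σ_{x=y·z} f y · g z (a finite sum over all defined splittings of x) and zero 𝕆 = λx.0 is a semiring. Additive idempotency lifts from Q to Q^S; commutativity lifts to Q^S if both S and Q are commutative; and if S is a partial monoid and Q is unital, then Q^S is unital with unit series 𝟙 mapping the unit of S to 1 and all other elements to 0. -/
/-- Convolution over a finite partial semigroup into a semiring:
`(f·g) x = Σ_{x = y·z} f y * g z`, a finite sum over all defined splittings of `x`. -/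
def fconv {S Q : Type*} [Fintype S] [DecidableEq S] [NonUnitalSemiring Q]
    (P : PartialSemigroup S) (f g : S → Q) : S → Q :=
  fun x => ∑ p ∈ Finset.univ.filter (fun p : S × S => P.pmul p.1 p.2 = some x),
    f p.1 * g p.2

/-- The unit power series: maps `one : S` to `e : Q` and all other elements to `0`. -/
def funit {S Q : Type*} [DecidableEq S] [Zero Q] (one : S) (e : Q) : S → Q :=
  fun x => if x = one then e else 0

theorem fconv_apply {S Q : Type*} [Fintype S] [DecidableEq S] [NonUnitalSemiring Q]
    (P : PartialSemigroup S) (f g : S → Q) (x : S) :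
    fconv P f g x = ∑ y, ∑ z, if P.pmul y z = some x then f y * g z else 0 := by
  rw [fconv, Finset.sum_filter, Fintype.sum_prod_type]

/-- Summing out the intermediate value `w` of a partial computation `o >>= p`. -/
theorem sum_ite_bind {S Q : Type*} [Fintype S] [DecidableEq S] [AddCommMonoid Q]
    (o : Option S) (p : S → Option S) (x : S) (t : Q) :
    (∑ w, if p w = some x then (if o = some w then t else 0) else 0) =
      if o.bind p = some x then t else 0 := by
  cases o with
  | none => simp
  | some v =>
    rw [Finset.sum_eq_single v]
    · simp
    · intro w _ hw
      simp [Ne.symm hw]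
    · simp

theorem fconv_fconv_left {S Q : Type*} [Fintype S] [DecidableEq S] [NonUnitalSemiring Q]
    (P : PartialSemigroup S) (f g h : S → Q) (x : S) :
    fconv P (fconv P f g) h x = ∑ a, ∑ b, ∑ c,
      if (P.pmul a b).bind (fun w => P.pmul w c) = some x then f a * g b * h c else 0 := by
  have key : ∀ w c, (if P.pmul w c = some x then fconv P f g w * h c else 0) =
      ∑ a, ∑ b, if P.pmul w c = some x then
        (if P.pmul a b = some w then f a * g b * h c else 0) else 0 := by
    intro w c
    split_ifs
    · simp only [fconv_apply, Finset.sum_mul, ite_mul, zero_mul]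
    · simp
  simp only [fconv_apply P (fconv P f g), key, ← sum_ite_bind]
  -- The sums run in the order `w, c, a, b` on the left and `a, b, c, w` on the right.
  rw [Finset.sum_comm, Finset.sum_congr rfl fun c _ => Finset.sum_comm, Finset.sum_comm]
  refine Finset.sum_congr rfl fun a _ => ?_
  rw [Finset.sum_congr rfl fun c _ => Finset.sum_comm, Finset.sum_comm]

theorem fconv_fconv_right {S Q : Type*} [Fintype S] [DecidableEq S] [NonUnitalSemiring Q]
    (P : PartialSemigroup S) (f g h : S → Q) (x : S) :
    fconv P f (fconv P g h) x = ∑ a, ∑ b, ∑ c,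
      if (P.pmul b c).bind (fun w => P.pmul a w) = some x then f a * g b * h c else 0 := by
  have key : ∀ a w, (if P.pmul a w = some x then f a * fconv P g h w else 0) =
      ∑ b, ∑ c, if P.pmul a w = some x then
        (if P.pmul b c = some w then f a * g b * h c else 0) else 0 := by
    intro a w
    split_ifs
    · simp only [fconv_apply, Finset.mul_sum, mul_ite, mul_zero, mul_assoc]
    · simp
  simp only [fconv_apply P f, key, ← sum_ite_bind]
  refine Finset.sum_congr rfl fun a _ => ?_
  rw [Finset.sum_comm]
  exact Finset.sum_congr rfl fun b _ => Finset.sum_comm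

/-- If `S` is a finite partial semigroup and `Q` a semiring, then `Q^S` with
pointwise addition and convolution is a semiring; additive idempotency lifts;
commutativity lifts if `S` and `Q` are commutative; and unitality lifts if
`S` is a partial monoid and `Q` is unital. -/
theorem stmt4 {S Q : Type*} [Fintype S] [DecidableEq S] [NonUnitalSemiring Q]
    (P : PartialSemigroup S) :
    -- pointwise addition: commutative additive monoid with 𝕆 = λ x. 0
    (∀ f g : S → Q, f + g = g + f) ∧
    (∀ f g h : S → Q, (f + g) + h = f + (g + h)) ∧
    (∀ f : S → Q, (0 : S → Q) + f = f) ∧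
    -- convolution is associative
    (∀ f g h : S → Q, fconv P (fconv P f g) h = fconv P f (fconv P g h)) ∧
    -- convolution distributes over pointwise addition on both sides
    (∀ f g h : S → Q, fconv P f (g + h) = fconv P f g + fconv P f h) ∧
    (∀ f g h : S → Q, fconv P (f + g) h = fconv P f h + fconv P g h) ∧
    -- the zero series annihilates on both sides
    (∀ f : S → Q, fconv P 0 f = 0) ∧
    (∀ f : S → Q, fconv P f 0 = 0) ∧
    -- additive idempotency lifts from Q to Q^S
    ((∀ a : Q, a + a = a) → ∀ f : S → Q, f + f = f) ∧
    -- commutativity lifts if both S and Q are commutative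
    ((∀ x y : S, P.pmul x y = P.pmul y x) → (∀ a b : Q, a * b = b * a) →
      ∀ f g : S → Q, fconv P f g = fconv P g f) ∧
    -- unitality lifts if S is a partial monoid and Q is unital
    (∀ one : S, (∀ x : S, P.pmul one x = some x) → (∀ x : S, P.pmul x one = some x) →
      ∀ e : Q, (∀ a : Q, e * a = a) → (∀ a : Q, a * e = a) →
        ∀ f : S → Q, fconv P (funit one e) f = f ∧ fconv P f (funit one e) = f) := by
  refine ⟨add_comm, add_assoc, zero_add, ?_, ?_, ?_, ?_, ?_, ?_, ?_, ?_⟩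
  · intro f g h
    funext x
    simp only [fconv_fconv_left, fconv_fconv_right, P.passoc]
  · intro f g h
    funext x
    simp [fconv, mul_add, Finset.sum_add_distrib]
  · intro f g h
    funext x
    simp [fconv, add_mul, Finset.sum_add_distrib]
  · intro f
    funext x
    simp [fconv]
  · intro f
    funext x
    simp [fconv]
  · intro hQ f
    funext x
    exact hQ (f x)
  · intro hS hQ f g
    funext x
    rw [fconv_apply, fconv_apply, Finset.sum_comm]
    refine Finset.sum_congr rfl fun y _ => Finset.sum_congr rfl fun z _ => ?_
    rw [hS z y, hQ (f z) (g y)]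
  · intro one hl hr e el er f
    constructor
    · funext x
      rw [fconv_apply, Finset.sum_eq_single one]
      · simp [funit, hl, el]
      · intro y _ hy
        simp [funit, hy]
      · simp
    · funext x
      rw [fconv_apply, Finset.sum_comm, Finset.sum_eq_single one]
      · simp [funit, hr, er]
      · intro y _ hy
        simp [funit, hy]
      · simp
end

section
/- Let (S,·,1) be a partial monoid. Then the monoid transformers (2^S)^S, with pointwise inclusion order and convolution (f·g) x = ⨆_{x=y·z} (f y)·(g z) where the product on 2^S is the complex product, form a distributive unital quantale; likewise the monoid predicate transformers (2^S)^{2^S}, with pointwise inclusion order and convolution (F·G) X = ⨆_{X=Y·Z} (F Y)·(G Z) where the splittings range over complex-product decompositions of X, form a distributive unital quantale. In both cases, the convolution is commutative whenever S is commutative. -/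
/-- A partial monoid: a partial semigroup with a unit. -/
structure PartialMonoid (S : Type*) extends PartialSemigroup S where
  unit : S
  unit_pmul : ∀ x : S, pmul unit x = some x
  pmul_unit : ∀ x : S, pmul x unit = some x

/-- The complex product on the powerset of a partial semigroup:
`X·Y = {x·y | x ∈ X, y ∈ Y, x·y defined}`. -/
def cprod {S : Type*} (P : PartialSemigroup S) (X Y : Set S) : Set S :=
  {z | ∃ x ∈ X, ∃ y ∈ Y, P.pmul x y = some z}

/-- Convolution of monoid transformers `f g : S → 2^S`:
`(f·g) x = ⨆_{x = y·z} (f y)·(g z)`, the product on `2^S` being the complex product. -/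
noncomputable def mtConv {S : Type*} (P : PartialMonoid S) (f g : S → Set S) : S → Set S :=
  fun x => ⨆ p : {p : S × S // P.pmul p.1 p.2 = some x},
    cprod P.toPartialSemigroup (f p.1.1) (g p.1.2)

/-- Convolution of monoid predicate transformers `F G : 2^S → 2^S`:
`(F·G) X = ⨆_{X = Y·Z} (F Y)·(G Z)`, the splittings ranging over
complex-product decompositions of `X`. -/
noncomputable def ptConv {S : Type*} (P : PartialMonoid S) (F G : Set S → Set S) :
    Set S → Set S :=
  fun X => ⨆ p : {p : Set S × Set S // cprod P.toPartialSemigroup p.1 p.2 = X},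
    cprod P.toPartialSemigroup (F p.1.1) (G p.1.2)

open Classical in
/-- Unit series for monoid transformers: maps the unit of `S` to `{1}` and
every other element to `∅`. -/
noncomputable def mtUnit {S : Type*} (P : PartialMonoid S) : S → Set S :=
  fun x => if x = P.unit then {P.unit} else ∅

open Classical in
/-- Unit series for monoid predicate transformers: maps `{1}` to `{1}` and
every other subset to `∅`. -/
noncomputable def ptUnit {S : Type*} (P : PartialMonoid S) : Set S → Set S :=
  fun X => if X = {P.unit} then {P.unit} else ∅

section ConvolutionHelpers

variable {T S : Type*}

theorem PartialSemigroup.assoc_right (P : PartialSemigroup S) {x y z w v : S}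
    (h₁ : P.pmul x y = some w) (h₂ : P.pmul w z = some v) :
    ∃ u, P.pmul y z = some u ∧ P.pmul x u = some v := by
  have h := P.passoc x y z
  rw [h₁, Option.bind_some, h₂] at h
  exact Option.bind_eq_some_iff.mp h.symm

theorem PartialSemigroup.assoc_left (P : PartialSemigroup S) {x y z u v : S}
    (h₁ : P.pmul y z = some u) (h₂ : P.pmul x u = some v) :
    ∃ w, P.pmul x y = some w ∧ P.pmul w z = some v := by
  have h := P.passoc x y z
  rw [h₁, Option.bind_some, h₂] at h
  exact Option.bind_eq_some_iff.mp h

theorem cprod_assoc (P : PartialSemigroup S) (X Y Z : Set S) :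
    cprod P (cprod P X Y) Z = cprod P X (cprod P Y Z) := by
  ext v
  constructor
  · rintro ⟨w, ⟨x, hx, y, hy, h₁⟩, z, hz, h₂⟩
    obtain ⟨u, h₃, h₄⟩ := P.assoc_right h₁ h₂
    exact ⟨x, hx, u, ⟨y, hy, z, hz, h₃⟩, h₄⟩
  · rintro ⟨x, hx, u, ⟨y, hy, z, hz, h₁⟩, h₂⟩
    obtain ⟨w, h₃, h₄⟩ := P.assoc_left h₁ h₂
    exact ⟨w, ⟨x, hx, y, hy, h₃⟩, z, hz, h₄⟩

theorem cprod_comm (P : PartialSemigroup S) (hP : ∀ x y, P.pmul x y = P.pmul y x) (X Y : Set S) :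
    cprod P X Y = cprod P Y X := by
  ext z
  constructor <;> rintro ⟨x, hx, y, hy, h⟩ <;> exact ⟨y, hy, x, hx, hP x y ▸ h⟩

/-- The powerset of a partial monoid under complex product, regarded as a partial monoid whose
multiplication is everywhere defined. -/
def PartialMonoid.powerset (P : PartialMonoid S) : PartialMonoid (Set S) where
  pmul X Y := some (cprod P.toPartialSemigroup X Y)
  passoc X Y Z := by simp [cprod_assoc]
  unit := {P.unit}
  unit_pmul X := by simp [cprod, P.unit_pmul]
  pmul_unit X := by simp [cprod, P.pmul_unit]

/-- Convolution on `T → Set S`: arguments are split in the partial monoid `A`, values are multiplied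
by the complex product of `P`. -/
def conv (A : PartialMonoid T) (P : PartialMonoid S) (f g : T → Set S) : T → Set S :=
  fun x => ⋃ p : {p : T × T // A.pmul p.1 p.2 = some x},
    cprod P.toPartialSemigroup (f p.1.1) (g p.1.2)

open Classical in
/-- The unit of `conv`: the unit of `A` goes to `{1}`, everything else to `∅`. -/
noncomputable def convUnit (A : PartialMonoid T) (P : PartialMonoid S) : T → Set S :=
  fun x => if x = A.unit then {P.unit} else ∅

theorem mtConv_eq_conv (P : PartialMonoid S) : mtConv P = conv P P := rfl

theorem mtUnit_eq_convUnit (P : PartialMonoid S) : mtUnit P = convUnit P P := rfl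

theorem ptUnit_eq_convUnit (P : PartialMonoid S) : ptUnit P = convUnit P.powerset P := rfl

variable (A : PartialMonoid T) (P : PartialMonoid S)

theorem mem_conv {f g : T → Set S} {x : T} {z : S} :
    z ∈ conv A P f g x ↔ ∃ u v, A.pmul u v = some x ∧
      ∃ a ∈ f u, ∃ b ∈ g v, P.pmul a b = some z := by
  simp [conv, cprod]

theorem mem_convUnit {x : T} {z : S} : z ∈ convUnit A P x ↔ x = A.unit ∧ z = P.unit := by
  unfold convUnit
  split_ifs with h <;> simp [h]

theorem ptConv_eq_conv : ptConv P = conv P.powerset P := by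
  funext F G X
  ext z
  simp [mem_conv, ptConv, PartialMonoid.powerset, cprod]

theorem conv_assoc (f g h : T → Set S) :
    conv A P (conv A P f g) h = conv A P f (conv A P g h) := by
  funext x
  ext z
  simp only [mem_conv]
  constructor
  · rintro ⟨u, v, huv, a, ⟨s, t, hst, c, hc, d, hd, hcd⟩, b, hb, hab⟩
    obtain ⟨r, h₁, h₂⟩ := A.assoc_right hst huv
    obtain ⟨e, h₃, h₄⟩ := P.assoc_right hcd hab
    exact ⟨s, r, h₂, c, hc, e, ⟨t, v, h₁, d, hd, b, hb, h₃⟩, h₄⟩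
  · rintro ⟨u, v, huv, a, ha, b, ⟨s, t, hst, c, hc, d, hd, hcd⟩, hab⟩
    obtain ⟨r, h₁, h₂⟩ := A.assoc_left hst huv
    obtain ⟨e, h₃, h₄⟩ := P.assoc_left hcd hab
    exact ⟨r, t, h₂, e, ⟨u, s, h₁, a, ha, c, hc, h₃⟩, d, hd, h₄⟩

theorem mem_sSup_apply {G : Set (T → Set S)} {x : T} {z : S} :
    z ∈ sSup G x ↔ ∃ g ∈ G, z ∈ g x := by
  simp [sSup_apply]

theorem mem_biSup_apply {ι : Type*} {G : Set ι} {k : ι → T → Set S} {x : T} {z : S} :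
    z ∈ (⨆ g ∈ G, k g) x ↔ ∃ g ∈ G, z ∈ k g x := by
  simp [iSup_apply]

theorem conv_sSup (f : T → Set S) (G : Set (T → Set S)) :
    conv A P f (sSup G) = ⨆ g ∈ G, conv A P f g := by
  funext x
  ext z
  simp only [mem_biSup_apply, mem_conv, mem_sSup_apply]
  constructor
  · rintro ⟨u, v, huv, a, ha, b, ⟨g, hg, hb⟩, hab⟩
    exact ⟨g, hg, u, v, huv, a, ha, b, hb, hab⟩
  · rintro ⟨g, hg, u, v, huv, a, ha, b, hb, hab⟩
    exact ⟨u, v, huv, a, ha, b, ⟨g, hg, hb⟩, hab⟩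

theorem sSup_conv (G : Set (T → Set S)) (f : T → Set S) :
    conv A P (sSup G) f = ⨆ g ∈ G, conv A P g f := by
  funext x
  ext z
  simp only [mem_biSup_apply, mem_conv, mem_sSup_apply]
  constructor
  · rintro ⟨u, v, huv, a, ⟨g, hg, ha⟩, b, hb, hab⟩
    exact ⟨g, hg, u, v, huv, a, ha, b, hb, hab⟩
  · rintro ⟨g, hg, u, v, huv, a, ha, b, hb, hab⟩
    exact ⟨u, v, huv, a, ⟨g, hg, ha⟩, b, hb, hab⟩

theorem convUnit_conv (f : T → Set S) : conv A P (convUnit A P) f = f := by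
  funext x
  ext z
  simp only [mem_conv, mem_convUnit]
  constructor
  · rintro ⟨u, v, huv, a, ⟨rfl, rfl⟩, b, hb, hab⟩
    rw [A.unit_pmul, Option.some_inj] at huv
    rw [P.unit_pmul, Option.some_inj] at hab
    exact huv ▸ hab ▸ hb
  · intro hz
    exact ⟨_, x, A.unit_pmul x, _, ⟨rfl, rfl⟩, z, hz, P.unit_pmul z⟩

theorem conv_convUnit (f : T → Set S) : conv A P f (convUnit A P) = f := by
  funext x
  ext z
  simp only [mem_conv, mem_convUnit]
  constructor
  · rintro ⟨u, v, huv, a, ha, b, ⟨rfl, rfl⟩, hab⟩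
    rw [A.pmul_unit, Option.some_inj] at huv
    rw [P.pmul_unit, Option.some_inj] at hab
    exact huv ▸ hab ▸ ha
  · intro hz
    exact ⟨x, _, A.pmul_unit x, z, hz, _, ⟨rfl, rfl⟩, P.pmul_unit z⟩

theorem conv_comm (hA : ∀ x y, A.pmul x y = A.pmul y x) (hP : ∀ x y, P.pmul x y = P.pmul y x)
    (f g : T → Set S) : conv A P f g = conv A P g f := by
  funext x
  ext z
  simp only [mem_conv]
  constructor <;> rintro ⟨u, v, huv, a, ha, b, hb, hab⟩ <;>
    exact ⟨v, u, hA u v ▸ huv, b, hb, a, ha, hP a b ▸ hab⟩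

end ConvolutionHelpers

/-- The monoid transformers `(2^S)^S` and the monoid predicate transformers
`(2^S)^{2^S}` over a partial monoid `S`, with pointwise inclusion order and
convolution, form distributive unital quantales; in both cases the convolution
is commutative whenever `S` is commutative. -/
theorem stmt6 {S : Type*} (P : PartialMonoid S) :
    -- monoid transformers: a distributive unital quantale
    (∀ f g h : S → Set S, mtConv P (mtConv P f g) h = mtConv P f (mtConv P g h)) ∧
    (∀ (f : S → Set S) (G : Set (S → Set S)), mtConv P f (sSup G) = ⨆ g ∈ G, mtConv P f g) ∧
    (∀ (G : Set (S → Set S)) (f : S → Set S), mtConv P (sSup G) f = ⨆ g ∈ G, mtConv P g f) ∧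
    (∀ (f : S → Set S) (A : Set (S → Set S)), f ⊓ sSup A = ⨆ g ∈ A, f ⊓ g) ∧
    (∀ (f : S → Set S) (A : Set (S → Set S)), f ⊔ sInf A = ⨅ g ∈ A, f ⊔ g) ∧
    (∀ f : S → Set S, mtConv P (mtUnit P) f = f ∧ mtConv P f (mtUnit P) = f) ∧
    ((∀ x y : S, P.pmul x y = P.pmul y x) →
      ∀ f g : S → Set S, mtConv P f g = mtConv P g f) ∧
    -- monoid predicate transformers: a distributive unital quantale
    (∀ F G H : Set S → Set S, ptConv P (ptConv P F G) H = ptConv P F (ptConv P G H)) ∧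
    (∀ (F : Set S → Set S) (𝒢 : Set (Set S → Set S)),
      ptConv P F (sSup 𝒢) = ⨆ G ∈ 𝒢, ptConv P F G) ∧
    (∀ (𝒢 : Set (Set S → Set S)) (F : Set S → Set S),
      ptConv P (sSup 𝒢) F = ⨆ G ∈ 𝒢, ptConv P G F) ∧
    (∀ (F : Set S → Set S) (𝒜 : Set (Set S → Set S)), F ⊓ sSup 𝒜 = ⨆ G ∈ 𝒜, F ⊓ G) ∧
    (∀ (F : Set S → Set S) (𝒜 : Set (Set S → Set S)), F ⊔ sInf 𝒜 = ⨅ G ∈ 𝒜, F ⊔ G) ∧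
    (∀ F : Set S → Set S, ptConv P (ptUnit P) F = F ∧ ptConv P F (ptUnit P) = F) ∧
    ((∀ x y : S, P.pmul x y = P.pmul y x) →
      ∀ F G : Set S → Set S, ptConv P F G = ptConv P G F) := by
  rw [mtConv_eq_conv, mtUnit_eq_convUnit, ptConv_eq_conv, ptUnit_eq_convUnit]
  exact ⟨conv_assoc P P, conv_sSup P P, sSup_conv P P,
    fun _ _ => inf_sSup_eq, fun _ _ => sup_sInf_eq,
    fun f => ⟨convUnit_conv P P f, conv_convUnit P P f⟩,
    fun hP => conv_comm P P hP hP,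
    conv_assoc _ P, conv_sSup _ P, sSup_conv _ P,
    fun _ _ => inf_sSup_eq, fun _ _ => sup_sInf_eq,
    fun F => ⟨convUnit_conv _ P F, conv_convUnit _ P F⟩,
    fun hP => conv_comm _ P (fun X Y => congrArg some (cprod_comm _ hP X Y)) hP⟩
end

section
/- Let (S₁,∘) be a partial semigroup, S₂ an arbitrary set, and (Q,≤,∘) a quantale. Then Q^{S₁×S₂}, ordered pointwise and with convolution in the first coordinate (F∘G) x y = ⨆_{x=x₁∘x₂} (F x₁ y) ∘ (G x₂ y), is a quantale; if Q is distributive, so is Q^{S₁×S₂}. If S₁ is a partial monoid with unit 1∘ and Q is unital, then Q^{S₁×S₂} is unital with unit 𝟙∘ defined by 𝟙∘ x y = 1 if x = 1∘ and 0 otherwise. If S₁ and Q are both commutative, then the convolution on Q^{S₁×S₂} is commutative. -/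
/-- Convolution of two-dimensional power series in the first coordinate:
`(F∘G) x y = ⨆_{x = x₁∘x₂} (F x₁ y) ∘ (G x₂ y)`. -/
noncomputable def convol₁ {S₁ S₂ Q : Type*} [CompleteLattice Q]
    (P₁ : PartialSemigroup S₁) (Qm : QuantaleStruct Q) (F G : S₁ → S₂ → Q) :
    S₁ → S₂ → Q :=
  fun x y => ⨆ p : {p : S₁ × S₁ // P₁.pmul p.1 p.2 = some x},
    Qm.mul (F p.1.1 y) (G p.1.2 y)

open Classical in
/-- The unit series `𝟙∘`: `𝟙∘ x y = e` if `x = one`, and `0 = ⊥` otherwise. -/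
noncomputable def unitSeries₁ {S₁ S₂ Q : Type*} [CompleteLattice Q] (one : S₁) (e : Q) :
    S₁ → S₂ → Q :=
  fun x _ => if x = one then e else ⊥

namespace QuantaleStruct

variable {Q : Type*} [CompleteLattice Q] (Qm : QuantaleStruct Q)

lemma mul_iSup_s11 {ι : Sort*} (a : Q) (f : ι → Q) :
    Qm.mul a (⨆ i, f i) = ⨆ i, Qm.mul a (f i) := by
  rw [iSup, Qm.mul_sSup, iSup_range]

lemma iSup_mul_s11 {ι : Sort*} (f : ι → Q) (a : Q) :
    Qm.mul (⨆ i, f i) a = ⨆ i, Qm.mul (f i) a := by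
  rw [iSup, Qm.sSup_mul, iSup_range]

lemma mul_bot_s11 (a : Q) : Qm.mul a ⊥ = ⊥ := by
  simpa using Qm.mul_sSup a ∅

lemma bot_mul_s11 (a : Q) : Qm.mul ⊥ a = ⊥ := by
  simpa using Qm.sSup_mul ∅ a

end QuantaleStruct

namespace PartialSemigroup

variable {S : Type*} (P : PartialSemigroup S)

lemma pmul_assoc_right {a b c w x : S} (hab : P.pmul a b = some w)
    (hwc : P.pmul w c = some x) : ∃ v, P.pmul b c = some v ∧ P.pmul a v = some x := by
  have h := P.passoc a b c
  rw [hab, Option.bind_some, hwc] at h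
  exact Option.bind_eq_some_iff.mp h.symm

lemma pmul_assoc_left {a b c v x : S} (hbc : P.pmul b c = some v)
    (hav : P.pmul a v = some x) : ∃ w, P.pmul a b = some w ∧ P.pmul w c = some x := by
  have h := P.passoc a b c
  rw [hbc, Option.bind_some, hav] at h
  exact Option.bind_eq_some_iff.mp h

end PartialSemigroup

section Convolution

variable {S₁ S₂ Q : Type*} [CompleteLattice Q] (P₁ : PartialSemigroup S₁)
  (Qm : QuantaleStruct Q)

lemma convol₁_le_iff {F G : S₁ → S₂ → Q} {x : S₁} {y : S₂} {c : Q} :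
    convol₁ P₁ Qm F G x y ≤ c ↔
      ∀ a b, P₁.pmul a b = some x → Qm.mul (F a y) (G b y) ≤ c := by
  simp [convol₁, iSup_le_iff]

lemma le_convol₁ (F G : S₁ → S₂ → Q) {x a b : S₁} (y : S₂) (h : P₁.pmul a b = some x) :
    Qm.mul (F a y) (G b y) ≤ convol₁ P₁ Qm F G x y :=
  (convol₁_le_iff P₁ Qm).mp le_rfl a b h

lemma mul_convol₁_le_iff {q : Q} {F G : S₁ → S₂ → Q} {x : S₁} {y : S₂} {c : Q} :
    Qm.mul q (convol₁ P₁ Qm F G x y) ≤ c ↔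
      ∀ a b, P₁.pmul a b = some x → Qm.mul q (Qm.mul (F a y) (G b y)) ≤ c := by
  simp [convol₁, Qm.mul_iSup_s11, iSup_le_iff]

lemma convol₁_mul_le_iff {q : Q} {F G : S₁ → S₂ → Q} {x : S₁} {y : S₂} {c : Q} :
    Qm.mul (convol₁ P₁ Qm F G x y) q ≤ c ↔
      ∀ a b, P₁.pmul a b = some x → Qm.mul (Qm.mul (F a y) (G b y)) q ≤ c := by
  simp [convol₁, Qm.iSup_mul_s11, iSup_le_iff]

lemma convol₁_assoc (F G H : S₁ → S₂ → Q) :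
    convol₁ P₁ Qm (convol₁ P₁ Qm F G) H = convol₁ P₁ Qm F (convol₁ P₁ Qm G H) := by
  funext x y
  apply le_antisymm
  · refine (convol₁_le_iff P₁ Qm).mpr fun w c hwc =>
      (convol₁_mul_le_iff P₁ Qm).mpr fun a b hab => ?_
    obtain ⟨v, hbc, hav⟩ := P₁.pmul_assoc_right hab hwc
    rw [Qm.mul_assoc']
    exact (mul_convol₁_le_iff P₁ Qm).mp (le_convol₁ P₁ Qm F _ y hav) b c hbc
  · refine (convol₁_le_iff P₁ Qm).mpr fun a v hav =>
      (mul_convol₁_le_iff P₁ Qm).mpr fun b c hbc => ?_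
    obtain ⟨w, hab, hwc⟩ := P₁.pmul_assoc_left hbc hav
    rw [← Qm.mul_assoc']
    exact (convol₁_mul_le_iff P₁ Qm).mp (le_convol₁ P₁ Qm _ H y hwc) a b hab

lemma convol₁_sSup (F : S₁ → S₂ → Q) (𝔊 : Set (S₁ → S₂ → Q)) :
    convol₁ P₁ Qm F (sSup 𝔊) = ⨆ G ∈ 𝔊, convol₁ P₁ Qm F G := by
  funext x y
  simp only [convol₁, sSup_eq_iSup, iSup_apply, Qm.mul_iSup_s11]
  rw [iSup_comm]
  exact iSup_congr fun G => iSup_comm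

lemma sSup_convol₁ (𝔊 : Set (S₁ → S₂ → Q)) (F : S₁ → S₂ → Q) :
    convol₁ P₁ Qm (sSup 𝔊) F = ⨆ G ∈ 𝔊, convol₁ P₁ Qm G F := by
  funext x y
  simp only [convol₁, sSup_eq_iSup, iSup_apply, Qm.iSup_mul_s11]
  rw [iSup_comm]
  exact iSup_congr fun G => iSup_comm

lemma unitSeries₁_convol₁ {one : S₁} (hone : ∀ x, P₁.pmul one x = some x) {e : Q}
    (he : ∀ a, Qm.mul e a = a) (F : S₁ → S₂ → Q) :
    convol₁ P₁ Qm (unitSeries₁ one e) F = F := by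
  funext x y
  apply le_antisymm
  · refine (convol₁_le_iff P₁ Qm).mpr fun a b hab => ?_
    by_cases ha : a = one
    · subst ha
      obtain rfl : b = x := Option.some.inj ((hone b).symm.trans hab)
      simp [unitSeries₁, he]
    · simp [unitSeries₁, ha, Qm.bot_mul_s11]
  · simpa [unitSeries₁, he] using le_convol₁ P₁ Qm (unitSeries₁ one e) F y (hone x)

lemma convol₁_unitSeries₁ {one : S₁} (hone : ∀ x, P₁.pmul x one = some x) {e : Q}
    (he : ∀ a, Qm.mul a e = a) (F : S₁ → S₂ → Q) :
    convol₁ P₁ Qm F (unitSeries₁ one e) = F := by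
  funext x y
  apply le_antisymm
  · refine (convol₁_le_iff P₁ Qm).mpr fun a b hab => ?_
    by_cases hb : b = one
    · subst hb
      obtain rfl : a = x := Option.some.inj ((hone a).symm.trans hab)
      simp [unitSeries₁, he]
    · simp [unitSeries₁, hb, Qm.mul_bot_s11]
  · simpa [unitSeries₁, he] using le_convol₁ P₁ Qm F (unitSeries₁ one e) y (hone x)

lemma convol₁_le_convol₁_swap (hP : ∀ x y, P₁.pmul x y = P₁.pmul y x)
    (hQ : ∀ a b, Qm.mul a b = Qm.mul b a) (F G : S₁ → S₂ → Q) :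
    convol₁ P₁ Qm F G ≤ convol₁ P₁ Qm G F := by
  intro x y
  refine (convol₁_le_iff P₁ Qm).mpr fun a b hab => ?_
  rw [hQ]
  exact le_convol₁ P₁ Qm G F y ((hP b a).trans hab)

end Convolution

/-- If `(S₁,∘)` is a partial semigroup, `S₂` an arbitrary set and `Q` a quantale,
then `Q^{S₁×S₂}`, ordered pointwise with convolution in the first coordinate,
is a quantale; distributivity lifts; unitality lifts if `S₁` is a partial monoid
and `Q` unital; and commutativity lifts if `S₁` and `Q` are commutative. -/
theorem stmt11 {S₁ S₂ Q : Type*} [CompleteLattice Q]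
    (P₁ : PartialSemigroup S₁) (Qm : QuantaleStruct Q) :
    -- associativity
    (∀ F G H : S₁ → S₂ → Q,
      convol₁ P₁ Qm (convol₁ P₁ Qm F G) H = convol₁ P₁ Qm F (convol₁ P₁ Qm G H)) ∧
    -- distribution over arbitrary (pointwise) suprema in both arguments
    (∀ (F : S₁ → S₂ → Q) (𝔊 : Set (S₁ → S₂ → Q)),
      convol₁ P₁ Qm F (sSup 𝔊) = ⨆ G ∈ 𝔊, convol₁ P₁ Qm F G) ∧
    (∀ (𝔊 : Set (S₁ → S₂ → Q)) (F : S₁ → S₂ → Q),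
      convol₁ P₁ Qm (sSup 𝔊) F = ⨆ G ∈ 𝔊, convol₁ P₁ Qm G F) ∧
    -- if Q is distributive, so is Q^{S₁×S₂}
    ((∀ (a : Q) (s : Set Q), a ⊓ sSup s = ⨆ b ∈ s, a ⊓ b) →
      ∀ (F : S₁ → S₂ → Q) (𝒜 : Set (S₁ → S₂ → Q)), F ⊓ sSup 𝒜 = ⨆ G ∈ 𝒜, F ⊓ G) ∧
    ((∀ (a : Q) (s : Set Q), a ⊔ sInf s = ⨅ b ∈ s, a ⊔ b) →
      ∀ (F : S₁ → S₂ → Q) (𝒜 : Set (S₁ → S₂ → Q)), F ⊔ sInf 𝒜 = ⨅ G ∈ 𝒜, F ⊔ G) ∧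
    -- unitality lifts with unit series 𝟙∘
    (∀ one : S₁, (∀ x : S₁, P₁.pmul one x = some x) → (∀ x : S₁, P₁.pmul x one = some x) →
      ∀ e : Q, (∀ a : Q, Qm.mul e a = a) → (∀ a : Q, Qm.mul a e = a) →
        ∀ F : S₁ → S₂ → Q,
          convol₁ P₁ Qm (unitSeries₁ one e) F = F ∧
          convol₁ P₁ Qm F (unitSeries₁ one e) = F) ∧
    -- commutativity lifts from S₁ and Q
    ((∀ x y : S₁, P₁.pmul x y = P₁.pmul y x) → (∀ a b : Q, Qm.mul a b = Qm.mul b a) →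
      ∀ F G : S₁ → S₂ → Q, convol₁ P₁ Qm F G = convol₁ P₁ Qm G F) := by
  refine ⟨convol₁_assoc P₁ Qm, convol₁_sSup P₁ Qm, sSup_convol₁ P₁ Qm, ?_, ?_, ?_, ?_⟩
  · intro h F 𝒜
    funext x y
    -- the hypothesis at the set of values `G x y`, `G ∈ 𝒜`
    have := h (F x y) (Set.image (fun G => G x y) 𝒜)
    simpa only [iSup_image, sSup_image, sSup_eq_iSup (s := 𝒜), Pi.inf_apply, iSup_apply]
      using this
  · intro h F 𝒜
    funext x y
    have := h (F x y) (Set.image (fun G => G x y) 𝒜)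
    simpa only [iInf_image, sInf_image, sInf_eq_iInf (s := 𝒜), Pi.sup_apply, iInf_apply]
      using this
  · intro one hl hr e hel her F
    exact ⟨unitSeries₁_convol₁ P₁ Qm hl hel F, convol₁_unitSeries₁ P₁ Qm hr her F⟩
  · intro hP hQ F G
    exact le_antisymm (convol₁_le_convol₁_swap P₁ Qm hP hQ F G)
      (convol₁_le_convol₁_swap P₁ Qm hP hQ G F)
end

section
/- Let (Q,≤,·,1) be a unital quantale with Hoare triples defined by ⊢{x}y{z} ⇔ x·y ≤ z and Kleene star y* = ⨆_{n∈ℕ} yⁿ. Then the following strengthened rules are derivable for all w₁,w₂,x,y,y₁,y₂,z ∈ Q: (strengthened choice) if ⊢{x·w₁}y₁{z} and ⊢{x·w₂}y₂{z}, then ⊢{x}w₁·y₁+w₂·y₂{z}; (strengthened while) if ⊢{x·w₁}y{x}, then ⊢{x}(w₁·y)*·w₂{x·w₂}, i.e. x·w₁·y ≤ x implies x·(w₁·y)*·w₂ ≤ x·w₂. -/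
/-- A unital quantale structure: a quantale with a multiplicative unit. -/
structure UnitalQuantaleStruct (Q : Type*) [CompleteLattice Q] extends QuantaleStruct Q where
  e : Q
  e_mul : ∀ a : Q, mul e a = a
  mul_e : ∀ a : Q, mul a e = a

/-- Powers: `y⁰ = 1` and `y^{n+1} = y · yⁿ`. -/
def qpow {Q : Type*} [CompleteLattice Q] (Qm : UnitalQuantaleStruct Q) (y : Q) : ℕ → Q
  | 0 => Qm.e
  | n + 1 => Qm.mul y (qpow Qm y n)

/-- The Kleene star `y* = ⨆_{n ∈ ℕ} yⁿ`. -/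
noncomputable def qstar {Q : Type*} [CompleteLattice Q] (Qm : UnitalQuantaleStruct Q)
    (y : Q) : Q :=
  ⨆ n : ℕ, qpow Qm y n

theorem mul_sup_eq {Q : Type*} [CompleteLattice Q] (Qm : UnitalQuantaleStruct Q) (x a b : Q) :
    Qm.mul x (a ⊔ b) = Qm.mul x a ⊔ Qm.mul x b := by
  rw [← sSup_pair, Qm.mul_sSup, iSup_pair]

/-- Monotonicity in the left factor, obtained from distributivity over `a ⊔ b = b`. -/
theorem mul_mono_left {Q : Type*} [CompleteLattice Q] (Qm : UnitalQuantaleStruct Q)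
    {a b : Q} (h : a ≤ b) (c : Q) : Qm.mul a c ≤ Qm.mul b c := by
  have hb : Qm.mul b c = Qm.mul a c ⊔ Qm.mul b c := by
    conv_lhs => rw [← sup_eq_right.mpr h, ← sSup_pair, Qm.sSup_mul, iSup_pair]
  rw [hb]
  exact le_sup_left

theorem mul_qpow_le {Q : Type*} [CompleteLattice Q] (Qm : UnitalQuantaleStruct Q)
    {x w : Q} (h : Qm.mul x w ≤ x) (n : ℕ) : Qm.mul x (qpow Qm w n) ≤ x := by
  induction n with
  | zero => exact (Qm.mul_e x).le
  | succ n ih =>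
    rw [qpow, ← Qm.mul_assoc']
    exact (mul_mono_left Qm h _).trans ih

/-- The star induction law `x + x·w ≤ x ⇒ x·w* ≤ x`. -/
theorem mul_qstar_le {Q : Type*} [CompleteLattice Q] (Qm : UnitalQuantaleStruct Q)
    {x w : Q} (h : Qm.mul x w ≤ x) : Qm.mul x (qstar Qm w) ≤ x := by
  rw [qstar, iSup, Qm.mul_sSup, iSup_range]
  exact iSup_le (mul_qpow_le Qm h)

/-- Strengthened choice and while rules in a unital quantale, with Hoare triples
`⊢{x}y{z}` defined by `x·y ≤ z`. -/
theorem stmt16 {Q : Type*} [CompleteLattice Q] (Qm : UnitalQuantaleStruct Q) :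
    -- (strengthened choice):
    -- from ⊢{x·w₁}y₁{z} and ⊢{x·w₂}y₂{z} infer ⊢{x}w₁·y₁ + w₂·y₂{z}
    (∀ w₁ w₂ x y₁ y₂ z : Q,
      Qm.mul (Qm.mul x w₁) y₁ ≤ z → Qm.mul (Qm.mul x w₂) y₂ ≤ z →
        Qm.mul x (Qm.mul w₁ y₁ ⊔ Qm.mul w₂ y₂) ≤ z) ∧
    -- (strengthened while):
    -- from ⊢{x·w₁}y{x} infer ⊢{x}(w₁·y)*·w₂{x·w₂}
    (∀ w₁ w₂ x y : Q,
      Qm.mul (Qm.mul x w₁) y ≤ x →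
        Qm.mul (Qm.mul x (qstar Qm (Qm.mul w₁ y))) w₂ ≤ Qm.mul x w₂) := by
  refine ⟨fun w₁ w₂ x y₁ y₂ z h₁ h₂ => ?_, fun w₁ w₂ x y h => ?_⟩
  · rw [mul_sup_eq, ← Qm.mul_assoc', ← Qm.mul_assoc']
    exact sup_le h₁ h₂
  · rw [Qm.mul_assoc'] at h
    exact mul_mono_left Qm (mul_qstar_le Qm h) w₂
end
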